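/- arXiv:math/0701439 — 2 statements merged into one kernel-verified Lean document; each statement's English description precedes it below -/
import Mathlib

section
/- Let p > 1 and let a, b ∈ ℝⁿ with a ≠ b. Then | |a|^{p−2}a − |b|^{p−2}b | ≤ (1 + |p − 2|) · |a − b| · ∫₀¹ |λa + (1−λ)b|^{p−2} dλ. -/
/-!
The map `J x = |x|^(p-2) x` is continuous, and differentiable away from the origin with
`‖DJ(x)‖ ≤ (1 + |p-2|) |x|^(p-2)`. A segment joining distinct points meets the origin at most
once, so `J a - J b` is bounded by the integral of this speed estimate along the segment. The
estimate is integrable even if the segment does meet the origin, because there it is a multiple of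
`|t - c|^(p-2)` and `p - 2 > -1`.
-/

open MeasureTheory Set AffineMap

section MeanValue

variable {F : Type*} [NormedAddCommGroup F] [NormedSpace ℝ F]

theorem norm_sub_le_integral_of_norm_deriv_le_off_countable {f f' : ℝ → F} {B : ℝ → ℝ}
    {a b : ℝ} {s : Set ℝ} (hab : a ≤ b) (hs : s.Countable) (hfc : ContinuousOn f (Icc a b))
    (hfd : ∀ t ∈ Ioo a b \ s, HasDerivAt f (f' t) t) (hfB : ∀ t ∈ Ioo a b \ s, ‖f' t‖ ≤ B t)
    (hBi : IntervalIntegrable B volume a b) :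
    ‖f b - f a‖ ≤ ∫ t in a..b, B t := by
  -- Testing against a norming functional reduces to scalar functions, so `F` may be incomplete.
  obtain ⟨φ, hφ_norm, hφ⟩ := exists_dual_vector'' ℝ (f b - f a)
  have hderiv : ∀ t ∈ Ioo a b \ s, HasDerivAt (φ ∘ f) (φ (f' t)) t := fun t ht =>
    φ.hasFDerivAt.comp_hasDerivAt t (hfd t ht)
  have hbound : ∀ t ∈ Ioo a b \ s, ‖deriv (φ ∘ f) t‖ ≤ B t := fun t ht => by
    rw [(hderiv t ht).deriv]
    exact (φ.le_of_opNorm_le hφ_norm _).trans (by simpa using hfB t ht)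
  have hbound_ae : ∀ᵐ t, t ∈ Ioc a b → ‖deriv (φ ∘ f) t‖ ≤ B t := by
    filter_upwards [hs.ae_notMem volume, Measure.ae_ne volume b] with t hts htb ht
    exact hbound t ⟨⟨ht.1, ht.2.lt_of_ne htb⟩, hts⟩
  have hint : IntervalIntegrable (deriv (φ ∘ f)) volume a b := by
    refine hBi.mono_fun' (aestronglyMeasurable_deriv _ _) ?_
    rwa [uIoc_of_le hab, Filter.EventuallyLE, ae_restrict_iff' measurableSet_Ioc]
  calc ‖f b - f a‖ = φ (f b) - φ (f a) := by simpa using hφ.symm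
    _ = ∫ t in a..b, deriv (φ ∘ f) t :=
      (integral_eq_of_hasDerivAt_off_countable_of_le (φ ∘ f) _ hab hs
        (φ.continuous.comp_continuousOn hfc)
        (fun t ht => (hderiv t ht).differentiableAt.hasDerivAt) hint).symm
    _ ≤ ‖∫ t in a..b, deriv (φ ∘ f) t‖ := Real.le_norm_self _
    _ ≤ ∫ t in a..b, B t := intervalIntegral.norm_integral_le_of_norm_le hab hbound_ae hBi

end MeanValue

section SegmentIntegrability

variable {F : Type*} [NormedAddCommGroup F] [NormedSpace ℝ F] {r : ℝ}

theorem intervalIntegrable_abs_rpow (hr : -1 < r) (s t : ℝ) :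
    IntervalIntegrable (fun x : ℝ => |x| ^ r) volume s t := by
  have hcpow : IntervalIntegrable (fun x : ℝ => (x : ℂ) ^ (r : ℂ)) volume s t :=
    intervalIntegral.intervalIntegrable_cpow' (by simpa using hr)
  simpa only [Complex.norm_cpow_real, Complex.norm_real, Real.norm_eq_abs] using hcpow.norm

theorem lineMap_eq_smul_of_lineMap_eq_zero {x y : F} {c : ℝ} (hc : lineMap x y c = (0 : F))
    (t : ℝ) : lineMap x y t = (t - c) • (y - x) := by
  rw [← sub_zero (lineMap x y t), ← hc, lineMap_apply_module', lineMap_apply_module']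
  module

theorem intervalIntegrable_norm_lineMap_rpow (hr : -1 < r) (x y : F) (s t : ℝ) :
    IntervalIntegrable (fun u : ℝ => ‖(lineMap x y u : F)‖ ^ r) volume s t := by
  by_cases hzero : ∃ c : ℝ, lineMap x y c = (0 : F)
  · obtain ⟨c, hc⟩ := hzero
    simp only [lineMap_eq_smul_of_lineMap_eq_zero hc, norm_smul, Real.norm_eq_abs,
      Real.mul_rpow (abs_nonneg _) (norm_nonneg _)]
    have hshift := (intervalIntegrable_abs_rpow hr (s - c) (t - c)).comp_sub_right c
    simp only [sub_add_cancel] at hshift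
    exact hshift.mul_const _
  · push Not at hzero
    exact (lineMap_continuous.norm.rpow_const
      fun u => Or.inl (norm_ne_zero_iff.2 (hzero u))).intervalIntegrable _ _

end SegmentIntegrability

theorem hasFDerivAt_norm_rpow_of_ne_zero {E : Type*} [NormedAddCommGroup E]
    [InnerProductSpace ℝ E] {x : E} (r : ℝ) (hx : x ≠ 0) :
    HasFDerivAt (fun y : E => ‖y‖ ^ r) ((r * ‖x‖ ^ (r - 2)) • innerSL ℝ x) x := by
  have hsq := (hasStrictFDerivAt_norm_sq x).hasFDerivAt.rpow_const (p := r / 2)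
    (Or.inl (by positivity))
  convert! hsq using 1
  · ext y
    rw [← Real.rpow_natCast_mul (norm_nonneg y)]
    ring_nf
  · rw [← Real.rpow_natCast_mul (norm_nonneg x), ← Nat.cast_smul_eq_nsmul ℝ, smul_smul]
    ring_nf

/-- The radial power map `x ↦ ‖x‖ ^ r • x`. On an inner product space and for `r = p - 2` it
is the gradient of `‖x‖ ^ p / p`, the vector field defining the `p`-Laplacian. -/
noncomputable def radialPow {F : Type*} [NormedAddCommGroup F] [NormedSpace ℝ F] (r : ℝ) (x : F) :
    F :=
  ‖x‖ ^ r • x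

namespace radialPow

section NormedSpace

variable {F : Type*} [NormedAddCommGroup F] [NormedSpace ℝ F] {r : ℝ}

theorem norm_eq (hr : r + 1 ≠ 0) (x : F) : ‖radialPow r x‖ = ‖x‖ ^ (r + 1) := by
  rw [radialPow, norm_smul, Real.norm_of_nonneg (by positivity),
    Real.rpow_add_one' (norm_nonneg x) hr]

theorem continuous (hr : -1 < r) : Continuous (radialPow r : F → F) := by
  refine continuous_iff_continuousAt.2 fun x => ?_
  rcases eq_or_ne x 0 with rfl | hx
  · have hnorm : Continuous fun y : F => ‖y‖ ^ (r + 1) :=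
      continuous_norm.rpow_const fun _ => Or.inr (by linarith)
    have hlim := hnorm.tendsto 0
    rw [norm_zero, Real.zero_rpow (by linarith)] at hlim
    rw [ContinuousAt, radialPow, smul_zero]
    exact squeeze_zero_norm (fun y => (norm_eq (by linarith) y).le) hlim
  · exact (continuousAt_id.norm.rpow_const (Or.inl (norm_ne_zero_iff.2 hx))).smul continuousAt_id

end NormedSpace

section InnerProductSpace

variable {E : Type*} [NormedAddCommGroup E] [InnerProductSpace ℝ E] {x : E}

theorem hasFDerivAt (r : ℝ) (hx : x ≠ 0) :
    HasFDerivAt (radialPow r)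
      (‖x‖ ^ r • .id ℝ E + ((r * ‖x‖ ^ (r - 2)) • innerSL ℝ x).smulRight x) x :=
  (hasFDerivAt_norm_rpow_of_ne_zero r hx).smul (hasFDerivAt_id x)

theorem norm_fderiv_le (r : ℝ) (hx : x ≠ 0) :
    ‖fderiv ℝ (radialPow r) x‖ ≤ (1 + |r|) * ‖x‖ ^ r := by
  have hpow : ‖x‖ ^ (r - 2) * ‖x‖ * ‖x‖ = ‖x‖ ^ r := by
    rw [mul_assoc, ← sq, ← Real.rpow_add_natCast (norm_ne_zero_iff.2 hx)]
    norm_num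
  rw [(hasFDerivAt r hx).fderiv]
  calc ‖‖x‖ ^ r • .id ℝ E + ((r * ‖x‖ ^ (r - 2)) • innerSL ℝ x).smulRight x‖
      ≤ ‖‖x‖ ^ r • ContinuousLinearMap.id ℝ E‖
        + ‖((r * ‖x‖ ^ (r - 2)) • innerSL ℝ x).smulRight x‖ := norm_add_le _ _
    _ = ‖x‖ ^ r * ‖ContinuousLinearMap.id ℝ E‖ + |r| * (‖x‖ ^ (r - 2) * ‖x‖ * ‖x‖) := by
      rw [ContinuousLinearMap.norm_smulRight_apply, norm_smul, norm_smul, norm_mul,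
        innerSL_apply_norm, Real.norm_eq_abs r, Real.norm_of_nonneg (by positivity),
        Real.norm_of_nonneg (by positivity)]
      ring
    _ ≤ ‖x‖ ^ r * 1 + |r| * ‖x‖ ^ r := by
      rw [hpow]
      gcongr
      exact ContinuousLinearMap.norm_id_le
    _ = (1 + |r|) * ‖x‖ ^ r := by ring

theorem norm_sub_le_integral {r : ℝ} (hr : -1 < r) (x y : E) :
    ‖radialPow r y - radialPow r x‖ ≤
      (1 + |r|) * ‖y - x‖ * ∫ t in (0 : ℝ)..1, ‖(lineMap x y t : E)‖ ^ r := by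
  rcases eq_or_ne x y with rfl | hxy
  · simp
  have hzeros : (lineMap x y ⁻¹' {(0 : E)} : Set ℝ).Countable :=
    (countable_singleton 0).preimage (lineMap_injective ℝ hxy)
  have hderiv : ∀ t ∈ Ioo (0 : ℝ) 1 \ lineMap x y ⁻¹' {(0 : E)},
      HasDerivAt (radialPow r ∘ lineMap x y) (fderiv ℝ (radialPow r) (lineMap x y t) (y - x)) t :=
    fun t ht => (hasFDerivAt r ht.2).differentiableAt.hasFDerivAt.comp_hasDerivAt t
      hasDerivAt_lineMap
  have hspeed : ∀ t ∈ Ioo (0 : ℝ) 1 \ lineMap x y ⁻¹' {(0 : E)},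
      ‖fderiv ℝ (radialPow r) (lineMap x y t) (y - x)‖ ≤
        (1 + |r|) * ‖y - x‖ * ‖(lineMap x y t : E)‖ ^ r := fun t ht => by
    rw [mul_right_comm]
    exact ContinuousLinearMap.le_of_opNorm_le _ (norm_fderiv_le r ht.2) _
  have hmean := norm_sub_le_integral_of_norm_deriv_le_off_countable zero_le_one hzeros
    ((continuous hr).comp lineMap_continuous).continuousOn hderiv hspeed
    ((intervalIntegrable_norm_lineMap_rpow hr x y 0 1).const_mul _)
  simpa only [Function.comp_apply, lineMap_apply_zero, lineMap_apply_one,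
    intervalIntegral.integral_const_mul] using hmean

end InnerProductSpace

end radialPow

theorem stmt_14_general {E : Type*} [NormedAddCommGroup E] [InnerProductSpace ℝ E] {p : ℝ}
    (hp : 1 < p) (a b : E) :
    ‖‖a‖ ^ (p - 2) • a - ‖b‖ ^ (p - 2) • b‖ ≤
      (1 + |p - 2|) * ‖a - b‖ * ∫ l in (0 : ℝ)..1, ‖l • a + (1 - l) • b‖ ^ (p - 2) := by
  simpa only [radialPow, lineMap_apply_module, add_comm] using
    radialPow.norm_sub_le_integral (r := p - 2) (by linarith) b a

/-- Inequality (nb4): for `p > 1` and `a ≠ b` in `ℝⁿ`,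
`| |a|^(p-2)a - |b|^(p-2)b | ≤ (1+|p-2|) |a-b| ∫₀¹ |λa+(1-λ)b|^(p-2) dλ`. -/
theorem stmt_14 (n : ℕ) (p : ℝ) (hp : 1 < p) (a b : EuclideanSpace ℝ (Fin n)) (hab : a ≠ b) :
    ‖‖a‖ ^ (p - 2) • a - ‖b‖ ^ (p - 2) • b‖ ≤
      (1 + |p - 2|) * ‖a - b‖ * ∫ l in (0 : ℝ)..1, ‖l • a + (1 - l) • b‖ ^ (p - 2) :=
  stmt_14_general hp a b
end

section
/- Let p ≥ 2. Then there exist constants C7, C8 > 0, depending only on p, such that for all a, b ∈ ℝⁿ not both zero, C7 · (|a|^{p−2} + |b|^{p−2}) ≤ ∫₀¹ |λa + (1−λ)b|^{p−2} dλ ≤ C8 · (|a|^{p−2} + |b|^{p−2}). -/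
/-!
For fixed norms of `a` and `b`, the integral is smallest when `a` and `b` point in opposite
directions, by the reverse triangle inequality `|λ‖a‖ - (1 - λ)‖b‖| ≤ ‖λa + (1 - λ)b‖`.
In that case the integral can be computed: with `s = ‖a‖`, `t = ‖b‖`, `q = p - 2` it equals
`(s^(q+1) + t^(q+1)) / ((q + 1)(s + t))`, and Chebyshev's sum inequality bounds this below by
`(s^q + t^q) / (2(q + 1))`, with equality for `b = -a`. The upper bound holds pointwise, since
`‖λa + (1 - λ)b‖ ≤ max ‖a‖ ‖b‖`.
-/

open Set intervalIntegral

section RealPowers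

variable {q s t : ℝ}

lemma abs_rpow_eqOn_rpow_uIcc_zero (q : ℝ) (hs : 0 ≤ s) :
    EqOn (fun u : ℝ => |u| ^ q) (fun u => u ^ q) (uIcc 0 s) := fun u hu => by
  rw [uIcc_of_le hs] at hu
  simp only [abs_of_nonneg hu.1]

lemma intervalIntegrable_abs_rpow_s17 (hq : -1 < q) (s t : ℝ) :
    IntervalIntegrable (fun u : ℝ => |u| ^ q) MeasureTheory.volume s t :=
  intervalIntegrable_of_even (fun u => by rw [abs_neg]) fun _ hx =>
    (intervalIntegrable_rpow' hq).congr
      ((abs_rpow_eqOn_rpow_uIcc_zero q hx.le).symm.mono uIoc_subset_uIcc)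

lemma integral_zero_abs_rpow (hq : -1 < q) (hs : 0 ≤ s) :
    ∫ u in (0 : ℝ)..s, |u| ^ q = s ^ (q + 1) / (q + 1) := by
  rw [integral_congr (abs_rpow_eqOn_rpow_uIcc_zero q hs), integral_rpow (Or.inl hq),
    Real.zero_rpow (by linarith), sub_zero]

lemma integral_abs_rpow (hq : -1 < q) (hs : 0 ≤ s) (ht : 0 ≤ t) :
    ∫ u in -t..s, |u| ^ q = (s ^ (q + 1) + t ^ (q + 1)) / (q + 1) := by
  have hneg : ∫ u in -t..0, |u| ^ q = ∫ u in (0 : ℝ)..t, |u| ^ q := by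
    simpa only [abs_neg, neg_zero] using
      (integral_comp_neg (a := 0) (b := t) fun u : ℝ => |u| ^ q).symm
  rw [← integral_add_adjacent_intervals (intervalIntegrable_abs_rpow_s17 hq (-t) 0)
      (intervalIntegrable_abs_rpow_s17 hq 0 s), hneg, integral_zero_abs_rpow hq ht,
    integral_zero_abs_rpow hq hs]
  ring

lemma integral_abs_mul_sub_mul_rpow (hq : -1 < q) (hs : 0 ≤ s) (ht : 0 ≤ t) (hst : s + t ≠ 0) :
    ∫ l in (0 : ℝ)..1, |l * s - (1 - l) * t| ^ q =
      (s ^ (q + 1) + t ^ (q + 1)) / ((q + 1) * (s + t)) := by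
  calc ∫ l in (0 : ℝ)..1, |l * s - (1 - l) * t| ^ q
      = ∫ l in (0 : ℝ)..1, |(s + t) * l + -t| ^ q := by
        congr 1 with l
        ring_nf
    _ = (s + t)⁻¹ * ∫ u in -t..s, |u| ^ q := by
        simpa using integral_comp_mul_add (a := 0) (b := 1) (fun u : ℝ => |u| ^ q) hst (-t)
    _ = (s ^ (q + 1) + t ^ (q + 1)) / ((q + 1) * (s + t)) := by
        rw [integral_abs_rpow hq hs ht, inv_mul_eq_div, div_div]

lemma rpow_add_rpow_mul_add_le (hq : 0 ≤ q) (hs : 0 ≤ s) (ht : 0 ≤ t) :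
    (s ^ q + t ^ q) * (s + t) ≤ 2 * (s ^ (q + 1) + t ^ (q + 1)) := by
  wlog hst : s ≤ t generalizing s t
  · simpa only [add_comm] using this ht hs (le_of_not_ge hst)
  have hpow : s ^ q ≤ t ^ q := Real.rpow_le_rpow hs hst hq
  have hrearrange : s ^ q * t + t ^ q * s ≤ s ^ q * s + t ^ q * t :=
    mul_add_mul_le_mul_add_mul hpow hst
  rw [Real.rpow_add_one' hs (by linarith), Real.rpow_add_one' ht (by linarith)]
  linarith

lemma rpow_add_rpow_div_le_integral (hq : 0 ≤ q) (hs : 0 ≤ s) (ht : 0 ≤ t) (hst : s + t ≠ 0) :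
    (s ^ q + t ^ q) / (2 * (q + 1)) ≤ ∫ l in (0 : ℝ)..1, |l * s - (1 - l) * t| ^ q := by
  rw [integral_abs_mul_sub_mul_rpow (by linarith) hs ht hst,
    div_le_div_iff₀ (by positivity) (by positivity)]
  linear_combination (q + 1) * rpow_add_rpow_mul_add_le hq hs ht

end RealPowers

section Segment

variable {E : Type*} [SeminormedAddCommGroup E] [NormedSpace ℝ E] {l q : ℝ}

lemma abs_mul_norm_sub_mul_norm_le (hl : l ∈ Icc (0 : ℝ) 1) (a b : E) :
    |l * ‖a‖ - (1 - l) * ‖b‖| ≤ ‖l • a + (1 - l) • b‖ := by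
  simpa only [norm_neg, sub_neg_eq_add, norm_smul_of_nonneg hl.1,
    norm_smul_of_nonneg (sub_nonneg.mpr hl.2)] using
    abs_norm_sub_norm_le (l • a) (-((1 - l) • b))

lemma norm_segment_rpow_le_add (hq : 0 ≤ q) (hl : l ∈ Icc (0 : ℝ) 1) (a b : E) :
    ‖l • a + (1 - l) • b‖ ^ q ≤ ‖a‖ ^ q + ‖b‖ ^ q := by
  have hmax : ‖l • a + (1 - l) • b‖ ≤ max ‖a‖ ‖b‖ :=
    convexOn_univ_norm.le_on_segment' (mem_univ a) (mem_univ b) hl.1 (sub_nonneg.mpr hl.2)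
      (add_sub_cancel l 1)
  calc ‖l • a + (1 - l) • b‖ ^ q ≤ max ‖a‖ ‖b‖ ^ q :=
        Real.rpow_le_rpow (norm_nonneg _) hmax hq
    _ = max (‖a‖ ^ q) (‖b‖ ^ q) := Real.rpow_max (norm_nonneg a) (norm_nonneg b) hq
    _ ≤ ‖a‖ ^ q + ‖b‖ ^ q := max_le_add_of_nonneg (by positivity) (by positivity)

lemma continuous_norm_segment_rpow (hq : 0 ≤ q) (a b : E) :
    Continuous fun l : ℝ => ‖l • a + (1 - l) • b‖ ^ q :=
  Continuous.rpow_const (by fun_prop) fun _ => Or.inr hq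

lemma rpow_norm_add_rpow_norm_div_le_integral (hq : 0 ≤ q) {a b : E} (hab : ‖a‖ + ‖b‖ ≠ 0) :
    (‖a‖ ^ q + ‖b‖ ^ q) / (2 * (q + 1)) ≤ ∫ l in (0 : ℝ)..1, ‖l • a + (1 - l) • b‖ ^ q := by
  have hcont : Continuous fun l : ℝ => |l * ‖a‖ - (1 - l) * ‖b‖| ^ q :=
    Continuous.rpow_const (by fun_prop) fun _ => Or.inr hq
  calc (‖a‖ ^ q + ‖b‖ ^ q) / (2 * (q + 1))
      ≤ ∫ l in (0 : ℝ)..1, |l * ‖a‖ - (1 - l) * ‖b‖| ^ q :=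
        rpow_add_rpow_div_le_integral hq (norm_nonneg a) (norm_nonneg b) hab
    _ ≤ ∫ l in (0 : ℝ)..1, ‖l • a + (1 - l) • b‖ ^ q :=
        integral_mono_on zero_le_one (hcont.intervalIntegrable 0 1)
          ((continuous_norm_segment_rpow hq a b).intervalIntegrable 0 1) fun _ hl =>
          Real.rpow_le_rpow (abs_nonneg _) (abs_mul_norm_sub_mul_norm_le hl a b) hq

lemma integral_norm_segment_rpow_le_add (hq : 0 ≤ q) (a b : E) :
    ∫ l in (0 : ℝ)..1, ‖l • a + (1 - l) • b‖ ^ q ≤ ‖a‖ ^ q + ‖b‖ ^ q := by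
  calc ∫ l in (0 : ℝ)..1, ‖l • a + (1 - l) • b‖ ^ q
      ≤ ∫ _ in (0 : ℝ)..1, (‖a‖ ^ q + ‖b‖ ^ q) :=
        integral_mono_on zero_le_one
          ((continuous_norm_segment_rpow hq a b).intervalIntegrable 0 1)
          intervalIntegrable_const fun _ hl => norm_segment_rpow_le_add hq hl a b
    _ = ‖a‖ ^ q + ‖b‖ ^ q := by rw [integral_const, sub_zero, one_smul]

end Segment

theorem stmt_17_general {E : Type*} [NormedAddCommGroup E] [NormedSpace ℝ E] {p : ℝ}
    (hp : 2 ≤ p) {a b : E} (hab : a ≠ 0 ∨ b ≠ 0) :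
    1 / (2 * (p - 1)) * (‖a‖ ^ (p - 2) + ‖b‖ ^ (p - 2)) ≤
        (∫ l in (0 : ℝ)..1, ‖l • a + (1 - l) • b‖ ^ (p - 2)) ∧
      (∫ l in (0 : ℝ)..1, ‖l • a + (1 - l) • b‖ ^ (p - 2)) ≤
        ‖a‖ ^ (p - 2) + ‖b‖ ^ (p - 2) := by
  have hq : 0 ≤ p - 2 := sub_nonneg.mpr hp
  have hnorm : ‖a‖ + ‖b‖ ≠ 0 := by
    rcases hab with ha | hb <;> positivity
  refine ⟨?_, integral_norm_segment_rpow_le_add hq a b⟩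
  rw [one_div_mul_eq_div, show p - 1 = p - 2 + 1 by ring]
  exact rpow_norm_add_rpow_norm_div_le_integral hq hnorm

/-- (nb6a): for `p ≥ 2` there are constants `C7, C8 > 0` depending only on `p` such that
for all `a, b ∈ ℝⁿ` not both zero,
`C7 (|a|^(p-2)+|b|^(p-2)) ≤ ∫₀¹ |λa+(1-λ)b|^(p-2) dλ ≤ C8 (|a|^(p-2)+|b|^(p-2))`. -/
theorem stmt_17 (p : ℝ) (hp : 2 ≤ p) :
    ∃ C7 C8 : ℝ, 0 < C7 ∧ 0 < C8 ∧
      ∀ (n : ℕ) (a b : EuclideanSpace ℝ (Fin n)), (a ≠ 0 ∨ b ≠ 0) →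
        C7 * (‖a‖ ^ (p - 2) + ‖b‖ ^ (p - 2)) ≤
          (∫ l in (0 : ℝ)..1, ‖l • a + (1 - l) • b‖ ^ (p - 2)) ∧
        (∫ l in (0 : ℝ)..1, ‖l • a + (1 - l) • b‖ ^ (p - 2)) ≤
          C8 * (‖a‖ ^ (p - 2) + ‖b‖ ^ (p - 2)) :=
  ⟨1 / (2 * (p - 1)), 1, one_div_pos.mpr (by linarith), one_pos, fun _ _ _ hab => by
    simpa only [one_mul] using stmt_17_general hp hab⟩
end
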